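/- There exists a constant C > 0, independent of h, the center of K, u and w, such that for every h > 0, every cube K of half side h, every function u of class C⁴ on a neighborhood of K, and every w in the shape space P(K) = P₂(K) + span{x₁³, x₂³, x₃³, x₁x₂x₃}, the contribution of the second normal derivatives on the pair of opposite faces normal to the x₂-axis satisfies |∫_{F₂⁺} (∂²u/∂x₂²) · R⁰_{F₂⁺}(∂w/∂x₂) dx₁dx₃ − ∫_{F₂⁻} (∂²u/∂x₂²) · R⁰_{F₂⁻}(∂w/∂x₂) dx₁dx₃| ≤ C h² |u|_{H⁴(K)} |w|_{H²(K)}. -/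

import Mathlib

open MeasureTheory

/-- Partial derivative in the first variable of a curried function on `ℝ³`. -/
noncomputable def qd1 (f : ℝ → ℝ → ℝ → ℝ) : ℝ → ℝ → ℝ → ℝ :=
  fun x y z => deriv (fun t => f t y z) x

/-- Partial derivative in the second variable of a curried function on `ℝ³`. -/
noncomputable def qd2 (f : ℝ → ℝ → ℝ → ℝ) : ℝ → ℝ → ℝ → ℝ :=
  fun x y z => deriv (fun t => f x t z) y

/-- Partial derivative in the third variable of a curried function on `ℝ³`. -/
noncomputable def qd3 (f : ℝ → ℝ → ℝ → ℝ) : ℝ → ℝ → ℝ → ℝ :=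
  fun x y z => deriv (fun t => f x y t) z

/-- Membership in the shape space `P(K) = P₂(K) + span{x₁³, x₂³, x₃³, x₁x₂x₃}` of the
three-dimensional cubic Morley element. -/
def MorleyShape3 (w : ℝ → ℝ → ℝ → ℝ) : Prop :=
  ∃ c0 c1 c2 c3 c4 c5 c6 c7 c8 c9 c10 c11 c12 c13 : ℝ, ∀ x y z : ℝ,
    w x y z = c0 + c1 * x + c2 * y + c3 * z + c4 * x ^ 2 + c5 * y ^ 2 + c6 * z ^ 2
      + c7 * (x * y) + c8 * (x * z) + c9 * (y * z)
      + c10 * x ^ 3 + c11 * y ^ 3 + c12 * z ^ 3 + c13 * (x * y * z)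

/-- The `H²` seminorm of `v` on the box `[a1,b1] × [a2,b2] × [a3,b3]`, each ordering of
mixed partial derivatives counted. -/
noncomputable def semiH2Box (v : ℝ → ℝ → ℝ → ℝ) (a1 b1 a2 b2 a3 b3 : ℝ) : ℝ :=
  Real.sqrt (∫ x in a1..b1, ∫ y in a2..b2, ∫ z in a3..b3,
    (qd1 (qd1 v) x y z) ^ 2 + (qd2 (qd2 v) x y z) ^ 2 + (qd3 (qd3 v) x y z) ^ 2
      + 2 * (qd1 (qd2 v) x y z) ^ 2 + 2 * (qd1 (qd3 v) x y z) ^ 2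
      + 2 * (qd2 (qd3 v) x y z) ^ 2)

/-- The `H⁴` seminorm of `u` on the box `[a1,b1] × [a2,b2] × [a3,b3]`, each ordering of
mixed partial derivatives counted (hence the multinomial coefficients). -/
noncomputable def semiH4Box (u : ℝ → ℝ → ℝ → ℝ) (a1 b1 a2 b2 a3 b3 : ℝ) : ℝ :=
  Real.sqrt (∫ x in a1..b1, ∫ y in a2..b2, ∫ z in a3..b3,
    (qd1 (qd1 (qd1 (qd1 u))) x y z) ^ 2 + (qd2 (qd2 (qd2 (qd2 u))) x y z) ^ 2
      + (qd3 (qd3 (qd3 (qd3 u))) x y z) ^ 2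
      + 4 * (qd1 (qd1 (qd1 (qd2 u))) x y z) ^ 2
      + 4 * (qd1 (qd1 (qd1 (qd3 u))) x y z) ^ 2
      + 4 * (qd1 (qd2 (qd2 (qd2 u))) x y z) ^ 2
      + 4 * (qd2 (qd2 (qd2 (qd3 u))) x y z) ^ 2
      + 4 * (qd1 (qd3 (qd3 (qd3 u))) x y z) ^ 2
      + 4 * (qd2 (qd3 (qd3 (qd3 u))) x y z) ^ 2
      + 6 * (qd1 (qd1 (qd2 (qd2 u))) x y z) ^ 2
      + 6 * (qd1 (qd1 (qd3 (qd3 u))) x y z) ^ 2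
      + 6 * (qd2 (qd2 (qd3 (qd3 u))) x y z) ^ 2
      + 12 * (qd1 (qd1 (qd2 (qd3 u))) x y z) ^ 2
      + 12 * (qd1 (qd2 (qd2 (qd3 u))) x y z) ^ 2
      + 12 * (qd1 (qd2 (qd3 (qd3 u))) x y z) ^ 2)

/-- `u` is of class `C⁴` on a neighborhood of the box `[a1,b1] × [a2,b2] × [a3,b3]`. -/
def C4Near3 (u : ℝ → ℝ → ℝ → ℝ) (a1 b1 a2 b2 a3 b3 : ℝ) : Prop :=
  ∃ U : Set (ℝ × ℝ × ℝ), IsOpen U ∧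
    Set.Icc a1 b1 ×ˢ (Set.Icc a2 b2 ×ˢ Set.Icc a3 b3) ⊆ U ∧
    ContDiffOn ℝ 4 (fun p : ℝ × ℝ × ℝ => u p.1 p.2.1 p.2.2) U

/-!
On the two opposite faces `∂₂w` has the same mean-free part `ρ(x₁, x₃)`, because `∂₂w` is a
function of `x₂` alone plus a bilinear function of `(x₁, x₃)`. The fundamental theorem of calculus
therefore turns the difference of the face integrals into `∫_K ∂₂³u · ρ`. Moreover
`ρ = (x₁ - m₁) ∂₁₂w + (x₃ - m₃) δ`, where `(m₁, m₃)` is the center of the face and `δ` is the value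
of `∂₂₃w`, which is affine in `x₁`, at the midpoint `x₁ = m₁`. Since `t - m` is the derivative of a
quadratic vanishing at both endpoints of `[a, b]` and bounded by `(b - a)² / 8`, one integration by
parts in each term trades the centered coordinate for `h²` and a fourth derivative of `u`.
Cauchy–Schwarz, and Jensen for `δ`, conclude.
-/

open Set Function
open scoped Interval

section IntegralInequalities

variable {X : Type*} [MeasurableSpace X] {μ : Measure X} {f g k : X → ℝ} {B : ℝ}

lemma integral_abs_mul_abs_le_sqrt_mul_sqrt (hf : MemLp f 2 μ) (hg : MemLp g 2 μ) :
    ∫ x, |f x| * |g x| ∂μ ≤ √(∫ x, f x ^ 2 ∂μ) * √(∫ x, g x ^ 2 ∂μ) := by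
  have holder := integral_mul_norm_le_Lp_mul_Lq Real.HolderConjugate.two_two
    (by simpa using hf) (by simpa using hg)
  simpa [Real.sqrt_eq_rpow] using holder

lemma abs_integral_mul_mul_le (hB : 0 ≤ B) (hk : ∀ᵐ x ∂μ, |k x| ≤ B)
    (hf : MemLp f 2 μ) (hg : MemLp g 2 μ) :
    |∫ x, f x * k x * g x ∂μ| ≤ B * √(∫ x, f x ^ 2 ∂μ) * √(∫ x, g x ^ 2 ∂μ) := by
  have hfg : Integrable (fun x => |f x| * |g x|) μ := hf.abs.integrable_mul hg.abs
  have hpt : ∀ᵐ x ∂μ, ‖f x * k x * g x‖ ≤ B * (|f x| * |g x|) := by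
    filter_upwards [hk] with x hx
    calc ‖f x * k x * g x‖ = |k x| * (|f x| * |g x|) := by
          rw [Real.norm_eq_abs, abs_mul, abs_mul]; ring
      _ ≤ B * (|f x| * |g x|) := by gcongr
  calc |∫ x, f x * k x * g x ∂μ| ≤ ∫ x, B * (|f x| * |g x|) ∂μ :=
        norm_integral_le_of_norm_le (hfg.const_mul B) hpt
    _ = B * ∫ x, |f x| * |g x| ∂μ := integral_const_mul ..
    _ ≤ B * (√(∫ x, f x ^ 2 ∂μ) * √(∫ x, g x ^ 2 ∂μ)) := by
        gcongr; exact integral_abs_mul_abs_le_sqrt_mul_sqrt hf hg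
    _ = B * √(∫ x, f x ^ 2 ∂μ) * √(∫ x, g x ^ 2 ∂μ) := by ring

end IntegralInequalities

section Interval

variable {a b : ℝ}

lemma integral_affine (A B : ℝ) :
    ∫ t in a..b, (A + B * t) = (b - a) * (A + B * ((a + b) / 2)) := by
  rw [intervalIntegral.integral_add (by simp) (Continuous.intervalIntegrable (by fun_prop) _ _),
    intervalIntegral.integral_const_mul, integral_id, intervalIntegral.integral_const, smul_eq_mul]
  ring

/- Integration by parts against the primitive `(t - a) * (t - b) / 2` of `t - (a + b) / 2`, which
vanishes at both endpoints. -/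
lemma integral_mul_sub_midpoint {φ φ' : ℝ → ℝ} (hφ : ∀ t ∈ [[a, b]], HasDerivAt φ (φ' t) t)
    (hφ' : IntervalIntegrable φ' volume a b) :
    ∫ t in a..b, φ t * (t - (a + b) / 2) = ∫ t in a..b, φ' t * ((t - a) * (b - t) / 2) := by
  have hprim (t : ℝ) : HasDerivAt (fun t => (t - a) * (t - b) / 2) (t - (a + b) / 2) t :=
    ((((hasDerivAt_id t).sub_const a).mul ((hasDerivAt_id t).sub_const b)).div_const 2).congr_deriv
      (by simp only [id_eq]; ring)
  rw [intervalIntegral.integral_mul_deriv_eq_deriv_mul hφ (fun t _ => hprim t) hφ'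
    (Continuous.intervalIntegrable (by fun_prop) _ _)]
  simp only [sub_self, mul_zero, zero_mul, zero_div, zero_sub, ← intervalIntegral.integral_neg]
  congr 1 with t
  ring

lemma abs_sub_mul_sub_half_le {t : ℝ} (ht : t ∈ Icc a b) :
    |(t - a) * (b - t) / 2| ≤ (b - a) ^ 2 / 8 := by
  have := mul_nonneg (sub_nonneg.2 ht.1) (sub_nonneg.2 ht.2)
  rw [abs_of_nonneg (by positivity)]
  linarith [sq_nonneg (t - a - (b - t))]

lemma integral_sq_affine_midpoint_le (hab : a ≤ b) (A B : ℝ) :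
    ∫ _ in a..b, (A + B * ((a + b) / 2)) ^ 2 ≤ ∫ t in a..b, (A + B * t) ^ 2 := by
  set M := A + B * ((a + b) / 2) with hM
  calc ∫ _ in a..b, M ^ 2
      = ∫ t in a..b, (M ^ 2 - 2 * M * B * ((a + b) / 2) + 2 * M * B * t) := by
        rw [integral_affine, intervalIntegral.integral_const, smul_eq_mul]; ring
    _ ≤ ∫ t in a..b, (A + B * t) ^ 2 :=
        intervalIntegral.integral_mono_on hab (Continuous.intervalIntegrable (by fun_prop) _ _)
          (Continuous.intervalIntegrable (by fun_prop) _ _) fun t _ => by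
            rw [hM]; linarith [sq_nonneg (B * (t - (a + b) / 2))]

end Interval

section Fubini

variable {Y : Type*} [MeasurableSpace Y] {ν : Measure Y} [SFinite ν] {a b : ℝ} {s : Set Y}
  {F : ℝ × Y → ℝ}

lemma setIntegral_Icc_prod (hab : a ≤ b) (hF : IntegrableOn F (Icc a b ×ˢ s) (volume.prod ν)) :
    ∫ p in Icc a b ×ˢ s, F p ∂volume.prod ν = ∫ x in a..b, ∫ q in s, F (x, q) ∂ν := by
  rw [setIntegral_prod F hF, intervalIntegral.integral_of_le hab, integral_Icc_eq_integral_Ioc]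

lemma setIntegral_Icc_prod_symm (hab : a ≤ b)
    (hF : IntegrableOn F (Icc a b ×ˢ s) (volume.prod ν)) :
    ∫ p in Icc a b ×ˢ s, F p ∂volume.prod ν = ∫ q in s, (∫ x in a..b, F (x, q)) ∂ν := by
  rw [IntegrableOn, ← Measure.prod_restrict] at hF
  rw [← Measure.prod_restrict, integral_prod_symm F hF]
  simp only [intervalIntegral.integral_of_le hab, integral_Icc_eq_integral_Ioc]

end Fubini

section Rectangle

variable {a b c d : ℝ} {F G : ℝ × ℝ → ℝ}

lemma setIntegral_rectangle (hab : a ≤ b) (hcd : c ≤ d)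
    (hF : ContinuousOn F (Icc a b ×ˢ Icc c d)) :
    ∫ p in Icc a b ×ˢ Icc c d, F p = ∫ x in a..b, ∫ y in c..d, F (x, y) := by
  have hint := hF.integrableOn_compact (μ := volume) (isCompact_Icc.prod isCompact_Icc)
  simp only [intervalIntegral.integral_of_le hcd, ← integral_Icc_eq_integral_Ioc]
  exact setIntegral_Icc_prod hab hint

lemma setIntegral_rectangle_symm (hab : a ≤ b) (hcd : c ≤ d)
    (hF : ContinuousOn F (Icc a b ×ˢ Icc c d)) :
    ∫ p in Icc a b ×ˢ Icc c d, F p = ∫ y in c..d, ∫ x in a..b, F (x, y) := by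
  have hint := hF.integrableOn_compact (μ := volume) (isCompact_Icc.prod isCompact_Icc)
  rw [intervalIntegral.integral_of_le hcd, ← integral_Icc_eq_integral_Ioc]
  exact setIntegral_Icc_prod_symm hab hint

lemma integral_integral_sub_of_continuousOn (hab : a ≤ b) (hcd : c ≤ d)
    (hF : ContinuousOn F (Icc a b ×ˢ Icc c d)) (hG : ContinuousOn G (Icc a b ×ˢ Icc c d)) :
    (∫ x in a..b, ∫ y in c..d, F (x, y)) - ∫ x in a..b, ∫ y in c..d, G (x, y)
      = ∫ x in a..b, ∫ y in c..d, (F (x, y) - G (x, y)) := by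
  have hK : IsCompact (Icc a b ×ˢ Icc c d) := isCompact_Icc.prod isCompact_Icc
  rw [← setIntegral_rectangle hab hcd hF, ← setIntegral_rectangle hab hcd hG,
    ← integral_sub (hF.integrableOn_compact hK) (hG.integrableOn_compact hK)]
  exact setIntegral_rectangle hab hcd (hF.sub hG)

end Rectangle

section PartialDerivatives

variable {f g : ℝ → ℝ → ℝ → ℝ} {U : Set (ℝ × ℝ × ℝ)} {n : ℕ} {x y z : ℝ}

lemma hasDerivAt_fderiv_fst (hf : DifferentiableAt ℝ ↿f (x, y, z)) :
    HasDerivAt (fun t => f t y z) (fderiv ℝ ↿f (x, y, z) (1, 0, 0)) x :=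
  HasFDerivAt.comp_hasDerivAt (l := ↿f) x hf.hasFDerivAt
    ((hasDerivAt_id x).prodMk ((hasDerivAt_const x y).prodMk (hasDerivAt_const x z)))

lemma hasDerivAt_fderiv_snd (hf : DifferentiableAt ℝ ↿f (x, y, z)) :
    HasDerivAt (fun t => f x t z) (fderiv ℝ ↿f (x, y, z) (0, 1, 0)) y :=
  HasFDerivAt.comp_hasDerivAt (l := ↿f) y hf.hasFDerivAt
    ((hasDerivAt_const y x).prodMk ((hasDerivAt_id y).prodMk (hasDerivAt_const y z)))

lemma hasDerivAt_fderiv_trd (hf : DifferentiableAt ℝ ↿f (x, y, z)) :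
    HasDerivAt (fun t => f x y t) (fderiv ℝ ↿f (x, y, z) (0, 0, 1)) z :=
  HasFDerivAt.comp_hasDerivAt (l := ↿f) z hf.hasFDerivAt
    ((hasDerivAt_const z x).prodMk ((hasDerivAt_const z y).prodMk (hasDerivAt_id z)))

lemma hasDerivAt_qd1 (hf : DifferentiableAt ℝ ↿f (x, y, z)) :
    HasDerivAt (fun t => f t y z) (qd1 f x y z) x :=
  (hasDerivAt_fderiv_fst hf).differentiableAt.hasDerivAt

lemma hasDerivAt_qd2 (hf : DifferentiableAt ℝ ↿f (x, y, z)) :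
    HasDerivAt (fun t => f x t z) (qd2 f x y z) y :=
  (hasDerivAt_fderiv_snd hf).differentiableAt.hasDerivAt

lemma hasDerivAt_qd3 (hf : DifferentiableAt ℝ ↿f (x, y, z)) :
    HasDerivAt (fun t => f x y t) (qd3 f x y z) z :=
  (hasDerivAt_fderiv_trd hf).differentiableAt.hasDerivAt

lemma differentiableAt_of_contDiffOn_succ (hU : IsOpen U) (hf : ContDiffOn ℝ (n + 1 : ℕ) ↿f U)
    {p : ℝ × ℝ × ℝ} (hp : p ∈ U) : DifferentiableAt ℝ ↿f p :=
  (hf.differentiableOn (by simp)).differentiableAt (hU.mem_nhds hp)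

lemma contDiffOn_fderiv_apply (hU : IsOpen U) (hf : ContDiffOn ℝ (n + 1 : ℕ) ↿f U)
    (e : ℝ × ℝ × ℝ) : ContDiffOn ℝ n (fun p => fderiv ℝ ↿f p e) U :=
  (hf.fderiv_of_isOpen hU (by norm_cast)).clm_apply contDiffOn_const

lemma contDiffOn_qd1 (hU : IsOpen U) (hf : ContDiffOn ℝ (n + 1 : ℕ) ↿f U) :
    ContDiffOn ℝ n ↿(qd1 f) U :=
  (contDiffOn_fderiv_apply hU hf (1, 0, 0)).congr fun _ hp =>
    (hasDerivAt_fderiv_fst (differentiableAt_of_contDiffOn_succ hU hf hp)).deriv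

lemma contDiffOn_qd2 (hU : IsOpen U) (hf : ContDiffOn ℝ (n + 1 : ℕ) ↿f U) :
    ContDiffOn ℝ n ↿(qd2 f) U :=
  (contDiffOn_fderiv_apply hU hf (0, 1, 0)).congr fun _ hp =>
    (hasDerivAt_fderiv_snd (differentiableAt_of_contDiffOn_succ hU hf hp)).deriv

lemma contDiffOn_qd3 (hU : IsOpen U) (hf : ContDiffOn ℝ (n + 1 : ℕ) ↿f U) :
    ContDiffOn ℝ n ↿(qd3 f) U :=
  (contDiffOn_fderiv_apply hU hf (0, 0, 1)).congr fun _ hp =>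
    (hasDerivAt_fderiv_trd (differentiableAt_of_contDiffOn_succ hU hf hp)).deriv

lemma eqOn_qd2 (hU : IsOpen U) (hfg : EqOn ↿f ↿g U) : EqOn ↿(qd2 f) ↿(qd2 g) U := by
  rintro ⟨x, y, z⟩ hp
  have hline : Continuous fun t : ℝ => (x, t, z) := by fun_prop
  have hmem : ∀ᶠ t in nhds y, (x, t, z) ∈ U := hline.continuousAt.eventually (hU.mem_nhds hp)
  exact Filter.EventuallyEq.deriv_eq (hmem.mono fun t ht => hfg ht)

lemma eqOn_qd3_qd2 (hU : IsOpen U) (hf : ContDiffOn ℝ (n + 2 : ℕ) ↿f U) :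
    EqOn ↿(qd3 (qd2 f)) ↿(qd2 (qd3 f)) U := by
  rintro ⟨x, y, z⟩ hp
  have hdiff {q} (hq : q ∈ U) : DifferentiableAt ℝ ↿f q :=
    differentiableAt_of_contDiffOn_succ (n := n + 1) hU hf hq
  have hdiff' : DifferentiableAt ℝ (fderiv ℝ ↿f) (x, y, z) :=
    ((hf.fderiv_of_isOpen (m := (n + 1 : ℕ)) hU (by norm_cast)).differentiableOn
      (by simp)).differentiableAt (hU.mem_nhds hp)
  have hsnd (e e' : ℝ × ℝ × ℝ) : fderiv ℝ (fun q => fderiv ℝ ↿f q e) (x, y, z) e'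
      = fderiv ℝ (fderiv ℝ ↿f) (x, y, z) e' e := by
    simp [fderiv_clm_apply hdiff' (differentiableAt_const e)]
  have hqd2 : ↿(qd2 f) =ᶠ[nhds (x, y, z)] fun q => fderiv ℝ ↿f q (0, 1, 0) :=
    (hU.eventually_mem hp).mono fun _ hq => (hasDerivAt_fderiv_snd (hdiff hq)).deriv
  have hqd3 : ↿(qd3 f) =ᶠ[nhds (x, y, z)] fun q => fderiv ℝ ↿f q (0, 0, 1) :=
    (hU.eventually_mem hp).mono fun _ hq => (hasDerivAt_fderiv_trd (hdiff hq)).deriv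
  have hsymm : IsSymmSndFDerivAt ℝ ↿f (x, y, z) :=
    (hf.contDiffAt (hU.mem_nhds hp)).isSymmSndFDerivAt (by simp)
  calc qd3 (qd2 f) x y z = fderiv ℝ ↿(qd2 f) (x, y, z) (0, 0, 1) :=
        (hasDerivAt_fderiv_trd (differentiableAt_of_contDiffOn_succ (n := n) hU
          (contDiffOn_qd2 hU hf) hp)).deriv
    _ = fderiv ℝ (fderiv ℝ ↿f) (x, y, z) (0, 0, 1) (0, 1, 0) := by rw [hqd2.fderiv_eq, hsnd]
    _ = fderiv ℝ (fderiv ℝ ↿f) (x, y, z) (0, 1, 0) (0, 0, 1) := hsymm _ _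
    _ = fderiv ℝ ↿(qd3 f) (x, y, z) (0, 1, 0) := by rw [hqd3.fderiv_eq, hsnd]
    _ = qd2 (qd3 f) x y z :=
        (hasDerivAt_fderiv_snd (differentiableAt_of_contDiffOn_succ (n := n) hU
          (contDiffOn_qd3 hU hf) hp)).deriv.symm

lemma eqOn_qd3_qd2_qd2_qd2 (hU : IsOpen U) (hf : ContDiffOn ℝ (4 : ℕ) ↿f U) :
    EqOn ↿(qd3 (qd2 (qd2 (qd2 f)))) ↿(qd2 (qd2 (qd2 (qd3 f)))) U :=
  have hf₁ : ContDiffOn ℝ (3 : ℕ) ↿(qd2 f) U := contDiffOn_qd2 hU hf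
  have hf₂ : ContDiffOn ℝ (2 : ℕ) ↿(qd2 (qd2 f)) U := contDiffOn_qd2 hU hf₁
  (eqOn_qd3_qd2 (n := 0) hU hf₂).trans <| eqOn_qd2 hU <|
    (eqOn_qd3_qd2 (n := 1) hU hf₁).trans <| eqOn_qd2 hU <| eqOn_qd3_qd2 (n := 2) hU hf

end PartialDerivatives

/-- The closed box `[a₁, b₁] × [a₂, b₂] × [a₃, b₃]` in `ℝ³`, the element on which we integrate. -/
abbrev closedBox (a₁ b₁ a₂ b₂ a₃ b₃ : ℝ) : Set (ℝ × ℝ × ℝ) :=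
  Icc a₁ b₁ ×ˢ Icc a₂ b₂ ×ˢ Icc a₃ b₃

section Box

variable {a₁ b₁ a₂ b₂ a₃ b₃ : ℝ} {F : ℝ × ℝ × ℝ → ℝ} {U : Set (ℝ × ℝ × ℝ)}
  {v : ℝ → ℝ → ℝ → ℝ} {g : ℝ → ℝ → ℝ}

local notation "K" => closedBox a₁ b₁ a₂ b₂ a₃ b₃

lemma isCompact_closedBox : IsCompact K :=
  isCompact_Icc.prod (isCompact_Icc.prod isCompact_Icc)

lemma memLp_two_closedBox (hF : ContinuousOn F K) : MemLp F 2 (volume.restrict K) :=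
  (memLp_two_iff_integrable_sq (hF.aestronglyMeasurable_of_isCompact isCompact_closedBox
    isCompact_closedBox.measurableSet)).2 ((hF.pow 2).integrableOn_compact isCompact_closedBox)

lemma continuousOn_slice_fst (hF : ContinuousOn F K) {x : ℝ} (hx : x ∈ Icc a₁ b₁) :
    ContinuousOn (fun q => F (x, q)) (Icc a₂ b₂ ×ˢ Icc a₃ b₃) :=
  hF.comp (by fun_prop) fun _ hq => ⟨hx, hq⟩

lemma setIntegral_closedBox (h₁ : a₁ ≤ b₁) (h₂ : a₂ ≤ b₂) (h₃ : a₃ ≤ b₃)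
    (hF : ContinuousOn F K) :
    ∫ p in K, F p = ∫ x in a₁..b₁, ∫ y in a₂..b₂, ∫ z in a₃..b₃, F (x, y, z) := by
  refine (setIntegral_Icc_prod h₁ (hF.integrableOn_compact isCompact_closedBox)).trans
    (intervalIntegral.integral_congr fun x hx => ?_)
  rw [uIcc_of_le h₁] at hx
  exact setIntegral_rectangle h₂ h₃ (continuousOn_slice_fst hF hx)

lemma setIntegral_closedBox_xzy (h₁ : a₁ ≤ b₁) (h₂ : a₂ ≤ b₂) (h₃ : a₃ ≤ b₃)
    (hF : ContinuousOn F K) :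
    ∫ p in K, F p = ∫ x in a₁..b₁, ∫ z in a₃..b₃, ∫ y in a₂..b₂, F (x, y, z) := by
  refine (setIntegral_Icc_prod h₁ (hF.integrableOn_compact isCompact_closedBox)).trans
    (intervalIntegral.integral_congr fun x hx => ?_)
  rw [uIcc_of_le h₁] at hx
  exact setIntegral_rectangle_symm h₂ h₃ (continuousOn_slice_fst hF hx)

lemma integral_mul_sub_midpoint_fst (h₁ : a₁ ≤ b₁) (hU : IsOpen U) (hKU : K ⊆ U)
    (hv : ContDiffOn ℝ (1 : ℕ) ↿v U) (hg : ContinuousOn ↿g (Icc a₂ b₂ ×ˢ Icc a₃ b₃)) :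
    ∫ p in K, ↿v p * (p.1 - (a₁ + b₁) / 2) * ↿g p.2
      = ∫ p in K, ↿(qd1 v) p * ((p.1 - a₁) * (b₁ - p.1) / 2) * ↿g p.2 := by
  have hvK : ContinuousOn ↿v K := hv.continuousOn.mono hKU
  have hdK : ContinuousOn ↿(qd1 v) K := (contDiffOn_qd1 (n := 0) hU hv).continuousOn.mono hKU
  have hgK : ContinuousOn (fun p : ℝ × ℝ × ℝ => ↿g p.2) K :=
    hg.comp continuousOn_snd fun _ hp => hp.2
  have hL : ContinuousOn (fun p => ↿v p * (p.1 - (a₁ + b₁) / 2) * ↿g p.2) K :=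
    (hvK.mul (by fun_prop)).mul hgK
  have hR : ContinuousOn (fun p => ↿(qd1 v) p * ((p.1 - a₁) * (b₁ - p.1) / 2) * ↿g p.2) K :=
    (hdK.mul (by fun_prop)).mul hgK
  rw [Measure.volume_eq_prod,
    setIntegral_Icc_prod_symm h₁ (hL.integrableOn_compact isCompact_closedBox),
    setIntegral_Icc_prod_symm h₁ (hR.integrableOn_compact isCompact_closedBox)]
  refine setIntegral_congr_fun (measurableSet_Icc.prod measurableSet_Icc) fun q hq => ?_
  have hmem {t : ℝ} (ht : t ∈ [[a₁, b₁]]) : (t, q) ∈ K := ⟨by rwa [uIcc_of_le h₁] at ht, hq⟩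
  simp only [intervalIntegral.integral_mul_const]
  congr 1
  refine integral_mul_sub_midpoint (φ := fun t => ↿v (t, q)) (fun t ht => ?_)
    (ContinuousOn.intervalIntegrable (hdK.comp (by fun_prop) fun t ht => hmem ht))
  exact hasDerivAt_qd1 (differentiableAt_of_contDiffOn_succ hU hv (hKU (hmem ht)))

lemma integral_mul_sub_midpoint_trd (h₁ : a₁ ≤ b₁) (h₂ : a₂ ≤ b₂) (h₃ : a₃ ≤ b₃) (hU : IsOpen U)
    (hKU : K ⊆ U) (hv : ContDiffOn ℝ (1 : ℕ) ↿v U) (hg : ContinuousOn ↿g (Icc a₁ b₁ ×ˢ Icc a₂ b₂)) :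
    ∫ p in K, ↿v p * (p.2.2 - (a₃ + b₃) / 2) * ↿g (p.1, p.2.1)
      = ∫ p in K, ↿(qd3 v) p * ((p.2.2 - a₃) * (b₃ - p.2.2) / 2) * ↿g (p.1, p.2.1) := by
  have hvK : ContinuousOn ↿v K := hv.continuousOn.mono hKU
  have hdK : ContinuousOn ↿(qd3 v) K := (contDiffOn_qd3 (n := 0) hU hv).continuousOn.mono hKU
  have hgK : ContinuousOn (fun p : ℝ × ℝ × ℝ => ↿g (p.1, p.2.1)) K :=
    hg.comp (by fun_prop) fun _ hp => ⟨hp.1, hp.2.1⟩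
  have hL : ContinuousOn (fun p => ↿v p * (p.2.2 - (a₃ + b₃) / 2) * ↿g (p.1, p.2.1)) K :=
    (hvK.mul (by fun_prop)).mul hgK
  have hR : ContinuousOn
      (fun p => ↿(qd3 v) p * ((p.2.2 - a₃) * (b₃ - p.2.2) / 2) * ↿g (p.1, p.2.1)) K :=
    (hdK.mul (by fun_prop)).mul hgK
  rw [setIntegral_closedBox h₁ h₂ h₃ hL, setIntegral_closedBox h₁ h₂ h₃ hR]
  refine intervalIntegral.integral_congr fun x hx => intervalIntegral.integral_congr fun y hy => ?_
  rw [uIcc_of_le h₁] at hx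
  rw [uIcc_of_le h₂] at hy
  have hmem {t : ℝ} (ht : t ∈ [[a₃, b₃]]) : (x, y, t) ∈ K :=
    ⟨hx, hy, by rwa [uIcc_of_le h₃] at ht⟩
  simp only [intervalIntegral.integral_mul_const]
  congr 1
  refine integral_mul_sub_midpoint (φ := fun t => v x y t) (fun t ht => ?_)
    (ContinuousOn.intervalIntegrable (hdK.comp (by fun_prop) fun t ht => hmem ht))
  exact hasDerivAt_qd3 (differentiableAt_of_contDiffOn_succ hU hv (hKU (hmem ht)))

lemma abs_integral_mul_sub_midpoint_fst_le (h₁ : a₁ ≤ b₁) (hU : IsOpen U) (hKU : K ⊆ U)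
    (hv : ContDiffOn ℝ (1 : ℕ) ↿v U) (hg : ContinuousOn ↿g (Icc a₂ b₂ ×ˢ Icc a₃ b₃)) :
    |∫ p in K, ↿v p * (p.1 - (a₁ + b₁) / 2) * ↿g p.2|
      ≤ (b₁ - a₁) ^ 2 / 8 * √(∫ p in K, ↿(qd1 v) p ^ 2) * √(∫ p in K, ↿g p.2 ^ 2) := by
  rw [integral_mul_sub_midpoint_fst h₁ hU hKU hv hg]
  have hdK : ContinuousOn ↿(qd1 v) K := (contDiffOn_qd1 (n := 0) hU hv).continuousOn.mono hKU
  refine abs_integral_mul_mul_le (by positivity) ?_ (memLp_two_closedBox hdK)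
    (memLp_two_closedBox (hg.comp continuousOn_snd fun _ hp => hp.2))
  exact (ae_restrict_mem isCompact_closedBox.measurableSet).mono fun p hp =>
    abs_sub_mul_sub_half_le hp.1

lemma abs_integral_mul_sub_midpoint_trd_le (h₁ : a₁ ≤ b₁) (h₂ : a₂ ≤ b₂) (h₃ : a₃ ≤ b₃)
    (hU : IsOpen U) (hKU : K ⊆ U) (hv : ContDiffOn ℝ (1 : ℕ) ↿v U)
    (hg : ContinuousOn ↿g (Icc a₁ b₁ ×ˢ Icc a₂ b₂)) :
    |∫ p in K, ↿v p * (p.2.2 - (a₃ + b₃) / 2) * ↿g (p.1, p.2.1)|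
      ≤ (b₃ - a₃) ^ 2 / 8 * √(∫ p in K, ↿(qd3 v) p ^ 2) * √(∫ p in K, ↿g (p.1, p.2.1) ^ 2) := by
  rw [integral_mul_sub_midpoint_trd h₁ h₂ h₃ hU hKU hv hg]
  have hdK : ContinuousOn ↿(qd3 v) K := (contDiffOn_qd3 (n := 0) hU hv).continuousOn.mono hKU
  have hgK : ContinuousOn (fun p : ℝ × ℝ × ℝ => ↿g (p.1, p.2.1)) K :=
    hg.comp (by fun_prop) fun _ hp => ⟨hp.1, hp.2.1⟩
  refine abs_integral_mul_mul_le (by positivity) ?_ (memLp_two_closedBox hdK)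
    (memLp_two_closedBox hgK)
  exact (ae_restrict_mem isCompact_closedBox.measurableSet).mono fun p hp =>
    abs_sub_mul_sub_half_le hp.2.2

lemma face_integral_sub_face_integral (h₁ : a₁ ≤ b₁) (h₂ : a₂ ≤ b₂) (h₃ : a₃ ≤ b₃) (hU : IsOpen U)
    (hKU : K ⊆ U) (hv : ContDiffOn ℝ (1 : ℕ) ↿v U) (hg : ContinuousOn ↿g (Icc a₁ b₁ ×ˢ Icc a₃ b₃)) :
    (∫ x in a₁..b₁, ∫ z in a₃..b₃, v x b₂ z * g x z)
        - ∫ x in a₁..b₁, ∫ z in a₃..b₃, v x a₂ z * g x z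
      = ∫ p in K, ↿(qd2 v) p * ↿g (p.1, p.2.2) := by
  have hdK : ContinuousOn ↿(qd2 v) K := (contDiffOn_qd2 (n := 0) hU hv).continuousOn.mono hKU
  have hgK : ContinuousOn (fun p : ℝ × ℝ × ℝ => ↿g (p.1, p.2.2)) K :=
    hg.comp (by fun_prop) fun _ hp => ⟨hp.1, hp.2.2⟩
  have hface {y : ℝ} (hy : y ∈ Icc a₂ b₂) :
      ContinuousOn (fun q : ℝ × ℝ => ↿v (q.1, y, q.2) * ↿g q) (Icc a₁ b₁ ×ˢ Icc a₃ b₃) :=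
    (hv.continuousOn.comp (by fun_prop) fun q hq => hKU ⟨hq.1, hy, hq.2⟩).mul hg
  refine (integral_integral_sub_of_continuousOn h₁ h₃ (hface (right_mem_Icc.2 h₂))
    (hface (left_mem_Icc.2 h₂))).trans ?_
  refine Eq.trans ?_ (setIntegral_closedBox_xzy h₁ h₂ h₃ (hdK.mul hgK)).symm
  refine intervalIntegral.integral_congr fun x hx => intervalIntegral.integral_congr fun z hz => ?_
  rw [uIcc_of_le h₁] at hx
  rw [uIcc_of_le h₃] at hz
  have hmem {t : ℝ} (ht : t ∈ [[a₂, b₂]]) : (x, t, z) ∈ K :=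
    ⟨hx, by rwa [uIcc_of_le h₂] at ht, hz⟩
  have ftc : ∫ y in a₂..b₂, qd2 v x y z = v x b₂ z - v x a₂ z :=
    intervalIntegral.integral_eq_sub_of_hasDerivAt (fun t ht =>
        hasDerivAt_qd2 (differentiableAt_of_contDiffOn_succ hU hv (hKU (hmem ht))))
      (ContinuousOn.intervalIntegrable (hdK.comp (by fun_prop) fun t ht => hmem ht))
  change v x b₂ z * g x z - v x a₂ z * g x z = ∫ y in a₂..b₂, qd2 v x y z * g x z
  rw [intervalIntegral.integral_mul_const, ftc, sub_mul]

lemma integral_sq_affine_midpoint_fst_le (h₁ : a₁ ≤ b₁) (A B : ℝ) :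
    ∫ _ in K, (A + B * ((a₁ + b₁) / 2)) ^ 2 ≤ ∫ p in K, (A + B * p.1) ^ 2 := by
  rw [Measure.volume_eq_prod, setIntegral_Icc_prod_symm h₁, setIntegral_Icc_prod_symm h₁]
  · have hconst (C : ℝ) : IntegrableOn (fun _ => C) (Icc a₂ b₂ ×ˢ Icc a₃ b₃) :=
      continuousOn_const.integrableOn_compact (isCompact_Icc.prod isCompact_Icc)
    exact setIntegral_mono (hconst _) (hconst (∫ x in a₁..b₁, (A + B * x) ^ 2))
      fun _ => integral_sq_affine_midpoint_le h₁ A B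
  all_goals exact ContinuousOn.integrableOn_compact isCompact_closedBox (by fun_prop)

end Box

section Seminorms

variable {a₁ b₁ a₂ b₂ a₃ b₃ : ℝ} {F : ℝ × ℝ × ℝ → ℝ} {U : Set (ℝ × ℝ × ℝ)}
  {u v : ℝ → ℝ → ℝ → ℝ}

local notation "K" => closedBox a₁ b₁ a₂ b₂ a₃ b₃

/-- The integrand of the squared `H²` seminorm `semiH2Box`. -/
noncomputable def h2Density (v : ℝ → ℝ → ℝ → ℝ) (x y z : ℝ) : ℝ :=
  (qd1 (qd1 v) x y z) ^ 2 + (qd2 (qd2 v) x y z) ^ 2 + (qd3 (qd3 v) x y z) ^ 2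
    + 2 * (qd1 (qd2 v) x y z) ^ 2 + 2 * (qd1 (qd3 v) x y z) ^ 2
    + 2 * (qd2 (qd3 v) x y z) ^ 2

/-- The integrand of the squared `H⁴` seminorm `semiH4Box`. -/
noncomputable def h4Density (u : ℝ → ℝ → ℝ → ℝ) (x y z : ℝ) : ℝ :=
  (qd1 (qd1 (qd1 (qd1 u))) x y z) ^ 2 + (qd2 (qd2 (qd2 (qd2 u))) x y z) ^ 2
    + (qd3 (qd3 (qd3 (qd3 u))) x y z) ^ 2
    + 4 * (qd1 (qd1 (qd1 (qd2 u))) x y z) ^ 2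
    + 4 * (qd1 (qd1 (qd1 (qd3 u))) x y z) ^ 2
    + 4 * (qd1 (qd2 (qd2 (qd2 u))) x y z) ^ 2
    + 4 * (qd2 (qd2 (qd2 (qd3 u))) x y z) ^ 2
    + 4 * (qd1 (qd3 (qd3 (qd3 u))) x y z) ^ 2
    + 4 * (qd2 (qd3 (qd3 (qd3 u))) x y z) ^ 2
    + 6 * (qd1 (qd1 (qd2 (qd2 u))) x y z) ^ 2
    + 6 * (qd1 (qd1 (qd3 (qd3 u))) x y z) ^ 2
    + 6 * (qd2 (qd2 (qd3 (qd3 u))) x y z) ^ 2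
    + 12 * (qd1 (qd1 (qd2 (qd3 u))) x y z) ^ 2
    + 12 * (qd1 (qd2 (qd2 (qd3 u))) x y z) ^ 2
    + 12 * (qd1 (qd2 (qd3 (qd3 u))) x y z) ^ 2

lemma continuousOn_h2Density (hU : IsOpen U) (hv : ContDiffOn ℝ (2 : ℕ) ↿v U) :
    ContinuousOn ↿(h2Density v) U := by
  have d1 {n : ℕ} {f} := contDiffOn_qd1 (n := n) (f := f) hU
  have d2 {n : ℕ} {f} := contDiffOn_qd2 (n := n) (f := f) hU
  have d3 {n : ℕ} {f} := contDiffOn_qd3 (n := n) (f := f) hU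
  have := (d1 (n := 0) (d1 hv)).continuousOn
  have := (d2 (n := 0) (d2 hv)).continuousOn
  have := (d3 (n := 0) (d3 hv)).continuousOn
  have := (d1 (n := 0) (d2 hv)).continuousOn
  have := (d1 (n := 0) (d3 hv)).continuousOn
  have := (d2 (n := 0) (d3 hv)).continuousOn
  simp only [HasUncurry.uncurry, id_eq, h2Density] at *
  fun_prop

lemma continuousOn_h4Density (hU : IsOpen U) (hu : ContDiffOn ℝ (4 : ℕ) ↿u U) :
    ContinuousOn ↿(h4Density u) U := by
  have d1 {n : ℕ} {f} := contDiffOn_qd1 (n := n) (f := f) hU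
  have d2 {n : ℕ} {f} := contDiffOn_qd2 (n := n) (f := f) hU
  have d3 {n : ℕ} {f} := contDiffOn_qd3 (n := n) (f := f) hU
  have u1 := d1 (n := 3) hu
  have u2 := d2 (n := 3) hu
  have u3 := d3 (n := 3) hu
  have u12 := d1 (n := 2) u2
  have u22 := d2 (n := 2) u2
  have u13 := d1 (n := 2) u3
  have u23 := d2 (n := 2) u3
  have u33 := d3 (n := 2) u3
  have := (d1 (n := 0) (d1 (d1 u1))).continuousOn
  have := (d2 (n := 0) (d2 u22)).continuousOn
  have := (d3 (n := 0) (d3 u33)).continuousOn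
  have := (d1 (n := 0) (d1 u12)).continuousOn
  have := (d1 (n := 0) (d1 u13)).continuousOn
  have := (d1 (n := 0) (d2 u22)).continuousOn
  have := (d2 (n := 0) (d2 u23)).continuousOn
  have := (d1 (n := 0) (d3 u33)).continuousOn
  have := (d2 (n := 0) (d3 u33)).continuousOn
  have := (d1 (n := 0) (d1 u22)).continuousOn
  have := (d1 (n := 0) (d1 u33)).continuousOn
  have := (d2 (n := 0) (d2 u33)).continuousOn
  have := (d1 (n := 0) (d1 u23)).continuousOn
  have := (d1 (n := 0) (d2 u23)).continuousOn
  have := (d1 (n := 0) (d2 u33)).continuousOn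
  simp only [HasUncurry.uncurry, id_eq, h4Density] at *
  fun_prop

lemma sqrt_integral_sq_le_semiH2Box (h₁ : a₁ ≤ b₁) (h₂ : a₂ ≤ b₂) (h₃ : a₃ ≤ b₃) (hU : IsOpen U)
    (hKU : K ⊆ U) (hv : ContDiffOn ℝ (2 : ℕ) ↿v U) (hF : ContinuousOn F K)
    (hle : ∀ p ∈ K, F p ^ 2 ≤ ↿(h2Density v) p) :
    √(∫ p in K, F p ^ 2) ≤ semiH2Box v a₁ b₁ a₂ b₂ a₃ b₃ := by
  have hdens : ContinuousOn ↿(h2Density v) K := (continuousOn_h2Density hU hv).mono hKU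
  calc √(∫ p in K, F p ^ 2) ≤ √(∫ p in K, ↿(h2Density v) p) :=
        Real.sqrt_le_sqrt <| setIntegral_mono_on
          ((hF.pow 2).integrableOn_compact isCompact_closedBox)
          (hdens.integrableOn_compact isCompact_closedBox) isCompact_closedBox.measurableSet hle
    _ = semiH2Box v a₁ b₁ a₂ b₂ a₃ b₃ := by rw [setIntegral_closedBox h₁ h₂ h₃ hdens]; rfl

lemma sqrt_integral_sq_le_semiH4Box (h₁ : a₁ ≤ b₁) (h₂ : a₂ ≤ b₂) (h₃ : a₃ ≤ b₃) (hU : IsOpen U)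
    (hKU : K ⊆ U) (hu : ContDiffOn ℝ (4 : ℕ) ↿u U) (hF : ContinuousOn F K)
    (hle : ∀ p ∈ K, F p ^ 2 ≤ ↿(h4Density u) p) :
    √(∫ p in K, F p ^ 2) ≤ semiH4Box u a₁ b₁ a₂ b₂ a₃ b₃ := by
  have hdens : ContinuousOn ↿(h4Density u) K := (continuousOn_h4Density hU hu).mono hKU
  calc √(∫ p in K, F p ^ 2) ≤ √(∫ p in K, ↿(h4Density u) p) :=
        Real.sqrt_le_sqrt <| setIntegral_mono_on
          ((hF.pow 2).integrableOn_compact isCompact_closedBox)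
          (hdens.integrableOn_compact isCompact_closedBox) isCompact_closedBox.measurableSet hle
    _ = semiH4Box u a₁ b₁ a₂ b₂ a₃ b₃ := by rw [setIntegral_closedBox h₁ h₂ h₃ hdens]; rfl

lemma sq_qd1_qd2_le_h2Density (x y z : ℝ) : qd1 (qd2 v) x y z ^ 2 ≤ h2Density v x y z := by
  rw [h2Density, ← sub_nonneg]
  ring_nf
  positivity

lemma sq_qd2_qd3_le_h2Density (x y z : ℝ) : qd2 (qd3 v) x y z ^ 2 ≤ h2Density v x y z := by
  rw [h2Density, ← sub_nonneg]
  ring_nf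
  positivity

lemma sq_qd1_qd2_qd2_qd2_le_h4Density (x y z : ℝ) :
    qd1 (qd2 (qd2 (qd2 u))) x y z ^ 2 ≤ h4Density u x y z := by
  rw [h4Density, ← sub_nonneg]
  ring_nf
  positivity

lemma sq_qd2_qd2_qd2_qd3_le_h4Density (x y z : ℝ) :
    qd2 (qd2 (qd2 (qd3 u))) x y z ^ 2 ≤ h4Density u x y z := by
  rw [h4Density, ← sub_nonneg]
  ring_nf
  positivity

lemma sqrt_integral_sq_qd1_qd2_qd2_qd2_le (h₁ : a₁ ≤ b₁) (h₂ : a₂ ≤ b₂) (h₃ : a₃ ≤ b₃)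
    (hU : IsOpen U) (hKU : K ⊆ U) (hu : ContDiffOn ℝ (4 : ℕ) ↿u U) :
    √(∫ p in K, ↿(qd1 (qd2 (qd2 (qd2 u)))) p ^ 2) ≤ semiH4Box u a₁ b₁ a₂ b₂ a₃ b₃ := by
  have hcont : ContDiffOn ℝ (0 : ℕ) ↿(qd1 (qd2 (qd2 (qd2 u)))) U :=
    contDiffOn_qd1 hU <| contDiffOn_qd2 hU <| contDiffOn_qd2 hU <| contDiffOn_qd2 hU hu
  exact sqrt_integral_sq_le_semiH4Box h₁ h₂ h₃ hU hKU hu (hcont.continuousOn.mono hKU)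
    fun p _ => sq_qd1_qd2_qd2_qd2_le_h4Density p.1 p.2.1 p.2.2

lemma sqrt_integral_sq_qd3_qd2_qd2_qd2_le (h₁ : a₁ ≤ b₁) (h₂ : a₂ ≤ b₂) (h₃ : a₃ ≤ b₃)
    (hU : IsOpen U) (hKU : K ⊆ U) (hu : ContDiffOn ℝ (4 : ℕ) ↿u U) :
    √(∫ p in K, ↿(qd3 (qd2 (qd2 (qd2 u)))) p ^ 2) ≤ semiH4Box u a₁ b₁ a₂ b₂ a₃ b₃ := by
  have hcont : ContDiffOn ℝ (0 : ℕ) ↿(qd3 (qd2 (qd2 (qd2 u)))) U :=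
    contDiffOn_qd3 hU <| contDiffOn_qd2 hU <| contDiffOn_qd2 hU <| contDiffOn_qd2 hU hu
  refine sqrt_integral_sq_le_semiH4Box h₁ h₂ h₃ hU hKU hu (hcont.continuousOn.mono hKU)
    fun p hp => ?_
  rw [eqOn_qd3_qd2_qd2_qd2 hU hu (hKU hp)]
  exact sq_qd2_qd2_qd2_qd3_le_h4Density p.1 p.2.1 p.2.2

end Seminorms

section MeanFluctuation

variable {a b c d : ℝ}

/-- The mean-free part `R⁰_F g = g - Π⁰_F g` of a function on the face `F = [a, b] × [c, d]`. The
mean is written with the area `(b - a) * (d - c)`, so `a < b` and `c < d` are understood. -/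
noncomputable def meanFluctuation (g : ℝ → ℝ → ℝ) (a b c d x z : ℝ) : ℝ :=
  g x z - 1 / ((b - a) * (d - c)) * ∫ s in a..b, ∫ t in c..d, g s t

lemma integral_integral_bilinear (A α β γ : ℝ) :
    ∫ x in a..b, ∫ z in c..d, (A + α * x + β * z + γ * (x * z))
      = (b - a) * (d - c) * (A + α * ((a + b) / 2) + β * ((c + d) / 2)
        + γ * ((a + b) / 2 * ((c + d) / 2))) := by
  have inner (x : ℝ) : ∫ z in c..d, (A + α * x + β * z + γ * (x * z))
      = (d - c) * (A + β * ((c + d) / 2)) + (d - c) * (α + γ * ((c + d) / 2)) * x := by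
    calc ∫ z in c..d, (A + α * x + β * z + γ * (x * z))
        = ∫ z in c..d, (A + α * x + (β + γ * x) * z) := by congr 1 with z; ring
      _ = (d - c) * (A + β * ((c + d) / 2)) + (d - c) * (α + γ * ((c + d) / 2)) * x := by
        rw [integral_affine]; ring
  simp only [inner, integral_affine]
  ring

lemma meanFluctuation_bilinear (hab : a < b) (hcd : c < d) (A α β γ x z : ℝ) :
    meanFluctuation (fun x z => A + α * x + β * z + γ * (x * z)) a b c d x z
      = (x - (a + b) / 2) * (α + γ * z) + (z - (c + d) / 2) * (β + γ * ((a + b) / 2)) := by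
  have hab' : b - a ≠ 0 := (sub_pos.2 hab).ne'
  have hcd' : d - c ≠ 0 := (sub_pos.2 hcd).ne'
  rw [meanFluctuation, integral_integral_bilinear]
  field_simp
  ring

end MeanFluctuation

section Superconvergence

variable {a₁ b₁ a₂ b₂ a₃ b₃ α β γ : ℝ} {φ : ℝ → ℝ} {U : Set (ℝ × ℝ × ℝ)}
  {u v w : ℝ → ℝ → ℝ → ℝ}

local notation "K" => closedBox a₁ b₁ a₂ b₂ a₃ b₃

lemma abs_integral_mul_centered_bilinear_le (h₁ : a₁ ≤ b₁) (h₂ : a₂ ≤ b₂) (h₃ : a₃ ≤ b₃)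
    (hU : IsOpen U) (hKU : K ⊆ U) (hv : ContDiffOn ℝ (1 : ℕ) ↿v U) :
    |∫ p in K, ↿v p * ((p.1 - (a₁ + b₁) / 2) * (α + γ * p.2.2)
        + (p.2.2 - (a₃ + b₃) / 2) * (β + γ * ((a₁ + b₁) / 2)))|
      ≤ (b₁ - a₁) ^ 2 / 8 * √(∫ p in K, ↿(qd1 v) p ^ 2) * √(∫ p in K, (α + γ * p.2.2) ^ 2)
        + (b₃ - a₃) ^ 2 / 8 * √(∫ p in K, ↿(qd3 v) p ^ 2) * √(∫ p in K, (β + γ * p.1) ^ 2) := by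
  set δ := β + γ * ((a₁ + b₁) / 2)
  have hvK : ContinuousOn ↿v K := hv.continuousOn.mono hKU
  have hfst := abs_integral_mul_sub_midpoint_fst_le (g := fun _ z => α + γ * z) h₁ hU hKU hv
    (Continuous.continuousOn (by simp only [HasUncurry.uncurry, id_eq]; fun_prop))
  have htrd := abs_integral_mul_sub_midpoint_trd_le (g := fun _ _ => δ) h₁ h₂ h₃ hU hKU hv
    continuousOn_const
  have hδ : √(∫ _ in K, δ ^ 2) ≤ √(∫ p in K, (β + γ * p.1) ^ 2) :=
    Real.sqrt_le_sqrt (integral_sq_affine_midpoint_fst_le h₁ β γ)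
  have hsplit : ∫ p in K, ↿v p * ((p.1 - (a₁ + b₁) / 2) * (α + γ * p.2.2)
        + (p.2.2 - (a₃ + b₃) / 2) * δ)
      = (∫ p in K, ↿v p * (p.1 - (a₁ + b₁) / 2) * (α + γ * p.2.2))
        + ∫ p in K, ↿v p * (p.2.2 - (a₃ + b₃) / 2) * δ := by
    rw [← integral_add
      (ContinuousOn.integrableOn_compact isCompact_closedBox (by fun_prop))
      (ContinuousOn.integrableOn_compact isCompact_closedBox (by fun_prop))]
    congr 1 with p
    ring
  rw [hsplit]
  exact (abs_add_le _ _).trans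
    (add_le_add hfst (htrd.trans (mul_le_mul_of_nonneg_left hδ (by positivity))))

lemma sqrt_integral_sq_mixed_le_semiH2Box (h₁ : a₁ ≤ b₁) (h₂ : a₂ ≤ b₂) (h₃ : a₃ ≤ b₃)
    (hw : ContDiff ℝ 2 ↿w)
    (hw₂ : ∀ x y z, qd2 w x y z = φ y + α * x + β * z + γ * (x * z)) :
    √(∫ p in K, (α + γ * p.2.2) ^ 2) ≤ semiH2Box w a₁ b₁ a₂ b₂ a₃ b₃ ∧
      √(∫ p in K, (β + γ * p.1) ^ 2) ≤ semiH2Box w a₁ b₁ a₂ b₂ a₃ b₃ := by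
  have hw' : ContDiffOn ℝ (2 : ℕ) ↿w univ := contDiffOn_univ.2 hw
  have h12 (x y z : ℝ) : qd1 (qd2 w) x y z = α + γ * z := by
    simp (disch := fun_prop) [qd1, hw₂, deriv_fun_add]
  have h23 (x y z : ℝ) : qd2 (qd3 w) x y z = β + γ * x := by
    have hcomm : qd3 (qd2 w) x y z = qd2 (qd3 w) x y z :=
      eqOn_qd3_qd2 (n := 0) isOpen_univ hw' (mem_univ (x, y, z))
    rw [← hcomm]
    simp (disch := fun_prop) [qd3, hw₂, deriv_fun_add]
  constructor
  · refine sqrt_integral_sq_le_semiH2Box h₁ h₂ h₃ isOpen_univ (subset_univ _) hw' (by fun_prop)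
      fun p _ => ?_
    exact (h12 p.1 p.2.1 p.2.2) ▸ sq_qd1_qd2_le_h2Density p.1 p.2.1 p.2.2
  · refine sqrt_integral_sq_le_semiH2Box h₁ h₂ h₃ isOpen_univ (subset_univ _) hw' (by fun_prop)
      fun p _ => ?_
    exact (h23 p.1 p.2.1 p.2.2) ▸ sq_qd2_qd3_le_h2Density p.1 p.2.1 p.2.2

theorem stmt_15_general (h₁ : a₁ < b₁) (h₂ : a₂ ≤ b₂) (h₃ : a₃ < b₃)
    (hu : C4Near3 u a₁ b₁ a₂ b₂ a₃ b₃) (hw : ContDiff ℝ 2 ↿w)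
    (hw₂ : ∀ x y z, qd2 w x y z = φ y + α * x + β * z + γ * (x * z)) :
    |(∫ x in a₁..b₁, ∫ z in a₃..b₃, qd2 (qd2 u) x b₂ z
            * meanFluctuation (fun s t => qd2 w s b₂ t) a₁ b₁ a₃ b₃ x z)
        - ∫ x in a₁..b₁, ∫ z in a₃..b₃, qd2 (qd2 u) x a₂ z
            * meanFluctuation (fun s t => qd2 w s a₂ t) a₁ b₁ a₃ b₃ x z|
      ≤ ((b₁ - a₁) ^ 2 + (b₃ - a₃) ^ 2) / 8 * semiH4Box u a₁ b₁ a₂ b₂ a₃ b₃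
        * semiH2Box w a₁ b₁ a₂ b₂ a₃ b₃ := by
  obtain ⟨U, hU, hKU, hu⟩ := hu
  have hu₂₂ : ContDiffOn ℝ (2 : ℕ) ↿(qd2 (qd2 u)) U := contDiffOn_qd2 hU (contDiffOn_qd2 hU hu)
  have hu₂₂₂ : ContDiffOn ℝ (1 : ℕ) ↿(qd2 (qd2 (qd2 u))) U := contDiffOn_qd2 hU hu₂₂
  obtain ⟨hfst, htrd⟩ := sqrt_integral_sq_mixed_le_semiH2Box h₁.le h₂ h₃.le hw hw₂
  simp only [hw₂, meanFluctuation_bilinear h₁ h₃]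
  rw [face_integral_sub_face_integral (g := fun x z => (x - (a₁ + b₁) / 2) * (α + γ * z)
    + (z - (a₃ + b₃) / 2) * (β + γ * ((a₁ + b₁) / 2))) h₁.le h₂ h₃.le hU hKU
    (hu₂₂.of_le (by norm_num))
    (Continuous.continuousOn (by simp only [HasUncurry.uncurry, id_eq]; fun_prop))]
  refine (abs_integral_mul_centered_bilinear_le h₁.le h₂ h₃.le hU hKU hu₂₂₂).trans ?_
  set S₄ := semiH4Box u a₁ b₁ a₂ b₂ a₃ b₃
  set S₂ := semiH2Box w a₁ b₁ a₂ b₂ a₃ b₃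
  have hS₄ : 0 ≤ S₄ := Real.sqrt_nonneg _
  calc _ ≤ (b₁ - a₁) ^ 2 / 8 * S₄ * S₂ + (b₃ - a₃) ^ 2 / 8 * S₄ * S₂ := by
        gcongr
        · exact sqrt_integral_sq_qd1_qd2_qd2_qd2_le h₁.le h₂ h₃.le hU hKU hu
        · exact sqrt_integral_sq_qd3_qd2_qd2_qd2_le h₁.le h₂ h₃.le hU hKU hu
    _ = ((b₁ - a₁) ^ 2 + (b₃ - a₃) ^ 2) / 8 * S₄ * S₂ := by ring

end Superconvergence

lemma deriv_cubic (k₀ k₁ k₂ k₃ t : ℝ) :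
    deriv (fun t => k₀ + k₁ * t + k₂ * t ^ 2 + k₃ * t ^ 3) t
      = k₁ + 2 * k₂ * t + 3 * k₃ * t ^ 2 := by
  have hid := hasDerivAt_id t
  have := (((hid.const_mul k₁).const_add k₀).add ((hid.pow 2).const_mul k₂)).add
    ((hid.pow 3).const_mul k₃)
  refine this.deriv.trans ?_
  simp only [id_eq, Nat.cast_ofNat, Nat.reduceSub, pow_one, mul_one]
  ring

namespace MorleyShape3

variable {w : ℝ → ℝ → ℝ → ℝ}

lemma contDiff (hw : MorleyShape3 w) {n : WithTop ℕ∞} : ContDiff ℝ n ↿w := by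
  obtain ⟨c0, c1, c2, c3, c4, c5, c6, c7, c8, c9, c10, c11, c12, c13, hw⟩ := hw
  simp only [HasUncurry.uncurry, id_eq, hw]
  fun_prop

lemma exists_qd2_eq (hw : MorleyShape3 w) :
    ∃ (φ : ℝ → ℝ) (α β γ : ℝ), ∀ x y z, qd2 w x y z = φ y + α * x + β * z + γ * (x * z) := by
  obtain ⟨c0, c1, c2, c3, c4, c5, c6, c7, c8, c9, c10, c11, c12, c13, hw⟩ := hw
  refine ⟨fun y => c2 + 2 * c5 * y + 3 * c11 * y ^ 2, c7, c9, c13, fun x y z => ?_⟩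
  calc qd2 w x y z
      = deriv (fun t => (c0 + c1 * x + c3 * z + c4 * x ^ 2 + c6 * z ^ 2 + c8 * (x * z)
          + c10 * x ^ 3 + c12 * z ^ 3) + (c2 + c7 * x + c9 * z + c13 * (x * z)) * t
          + c5 * t ^ 2 + c11 * t ^ 3) y := by
        simp only [qd2, hw]
        congr 1 with t
        ring
    _ = c2 + 2 * c5 * y + 3 * c11 * y ^ 2 + c7 * x + c9 * z + c13 * (x * z) := by
        rw [deriv_cubic]
        ring

end MorleyShape3

/-- Superconvergence of the normal-normal boundary term on the pair of opposite faces of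
one cubic element normal to the `x₂`-axis. -/
theorem stmt_15 :
    ∃ C > (0:ℝ), ∀ h : ℝ, 0 < h → ∀ c1 c2 c3 : ℝ, ∀ u w : ℝ → ℝ → ℝ → ℝ,
      C4Near3 u (c1 - h) (c1 + h) (c2 - h) (c2 + h) (c3 - h) (c3 + h) → MorleyShape3 w →
      |(∫ x in (c1 - h)..(c1 + h), ∫ z in (c3 - h)..(c3 + h),
            qd2 (qd2 u) x (c2 + h) z
              * (qd2 w x (c2 + h) z
                - (1 / (4 * h ^ 2)) * (∫ s in (c1 - h)..(c1 + h), ∫ t in (c3 - h)..(c3 + h), qd2 w s (c2 + h) t)))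
          - (∫ x in (c1 - h)..(c1 + h), ∫ z in (c3 - h)..(c3 + h),
            qd2 (qd2 u) x (c2 - h) z
              * (qd2 w x (c2 - h) z
                - (1 / (4 * h ^ 2)) * (∫ s in (c1 - h)..(c1 + h), ∫ t in (c3 - h)..(c3 + h), qd2 w s (c2 - h) t)))|
        ≤ C * h ^ 2 * semiH4Box u (c1 - h) (c1 + h) (c2 - h) (c2 + h) (c3 - h) (c3 + h) * semiH2Box w (c1 - h) (c1 + h) (c2 - h) (c2 + h) (c3 - h) (c3 + h) := by
  refine ⟨1, one_pos, fun h hh c1 c2 c3 u w hu hw => ?_⟩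
  obtain ⟨φ, α, β, γ, hw₂⟩ := hw.exists_qd2_eq
  have key := stmt_15_general (by linarith) (by linarith) (by linarith) hu hw.contDiff hw₂
  have harea : (c1 + h - (c1 - h)) * (c3 + h - (c3 - h)) = 4 * h ^ 2 := by ring
  have hconst : ((c1 + h - (c1 - h)) ^ 2 + (c3 + h - (c3 - h)) ^ 2) / 8 = 1 * h ^ 2 := by ring
  simpa only [meanFluctuation, harea, hconst] using key
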